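/- Three-dimensional middle-time piece estimate: fix 2 < r < 6. For any t > 0, any B > 0, any measurable interval I ⊆ [t/2, max(t/2, t−B)], and any measurable u : I × ℝ³ → ℂ, one has ‖ ∫_I e^{i(t−s)Δ} (|u|^{4/3}u)(s) ds ‖_{L^r_x(ℝ³)} ≤ C B^{−3(r−2)/(4r)} ‖u‖^{7/3}_{L^{28r/(3(r+6))}_s L^{7r/(3(r−1))}_x(I×ℝ³)}, with C depending only on r. -/

import Mathlib

open MeasureTheory Set
open scoped ENNReal Real

noncomputable section

/-- The free Schrödinger propagator `e^{itΔ}` acting on functions on a `d`-dimensional space: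
for `t ≠ 0`, `(e^{itΔ}f)(x) = (4πit)^{-d/2} ∫ e^{i|x-y|²/(4t)} f(y) dy`, and `e^{i0Δ}f = f`. -/
def schrod {E : Type*} [NormedAddCommGroup E] [MeasureSpace E] (d : ℕ) (t : ℝ) (f : E → ℂ) :
    E → ℂ :=
  if t = 0 then f
  else fun x =>
    (4 * (Real.pi : ℂ) * Complex.I * (t : ℂ)) ^ (-(d : ℂ) / 2) *
      ∫ y, Complex.exp (Complex.I * ((‖x - y‖ ^ 2 : ℝ) : ℂ) / (4 * (t : ℂ))) * f y

/-- Mixed Lebesgue norm `‖u‖_{L^p_t L^q_x (I × space)}`. -/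
def mixedNorm {α : Type*} [MeasurableSpace α] (ν : Measure α) (I : Set ℝ) (p q : ℝ≥0∞)
    (u : ℝ → α → ℂ) : ℝ≥0∞ :=
  if p = ∞ then essSup (fun t => eLpNorm (u t) q ν) (volume.restrict I)
  else (∫⁻ t in I, eLpNorm (u t) q ν ^ p.toReal) ^ (1 / p.toReal)

/-- Lorentz quasinorm `p^{1/q} ‖ λ · ν({g > λ})^{1/p} ‖_{L^q((0,∞), dλ/λ)}`
for an `ℝ≥0∞`-valued function `g`. -/
def lorentzNorm {α : Type*} [MeasurableSpace α] (ν : Measure α) (p q : ℝ≥0∞)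
    (g : α → ℝ≥0∞) : ℝ≥0∞ :=
  if q = ∞ then
    ⨆ l ∈ Set.Ioi (0 : ℝ), ENNReal.ofReal l * ν {x | ENNReal.ofReal l < g x} ^ p⁻¹.toReal
  else
    (p * ∫⁻ l in Set.Ioi (0 : ℝ),
        (ENNReal.ofReal l * ν {x | ENNReal.ofReal l < g x} ^ p⁻¹.toReal) ^ q.toReal /
          ENNReal.ofReal l) ^ q⁻¹.toReal

/-- Lorentz quasinorm `‖f‖_{L^{p,q}}` of a scalar function. -/
def lorentzNormC {α : Type*} [MeasurableSpace α] (ν : Measure α) (p q : ℝ≥0∞)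
    (f : α → ℂ) : ℝ≥0∞ :=
  lorentzNorm ν p q fun x => (‖f x‖₊ : ℝ≥0∞)

/-- Lorentz-in-time mixed norm `‖u‖_{L^{p,q}_t L^r_x (I × space)}`. -/
def lorentzMixedNorm {α : Type*} [MeasurableSpace α] (ν : Measure α) (I : Set ℝ)
    (p q r : ℝ≥0∞) (u : ℝ → α → ℂ) : ℝ≥0∞ :=
  lorentzNorm (volume.restrict I) p q fun t => eLpNorm (u t) r ν

/-- The nonlinearity `|f|^a f`. -/
def nonlin {E : Type*} (a : ℝ) (f : E → ℂ) : E → ℂ := fun x => ((‖f x‖ ^ a : ℝ) : ℂ) * f x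


lemma mink_aux {S X : Type*} [MeasurableSpace S] [MeasurableSpace X] (μ : Measure S)
    (ν : Measure X) [SFinite μ] [SFinite ν] {r : ℝ} (hr : 1 < r) (F : S → X → ℝ≥0∞)
    (hF : Measurable (Function.uncurry F)) (G : X → ℝ≥0∞) (hG : Measurable G)
    (hGH : ∀ x, G x ≤ ∫⁻ s, F s x ∂μ) (hfin : ∫⁻ x, G x ^ r ∂ν ≠ ∞) :
    ∫⁻ x, G x ^ r ∂ν ≤ (∫⁻ s, (∫⁻ x, F s x ^ r ∂ν) ^ (1 / r) ∂μ) ^ r := by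
  set N := ∫⁻ x, G x ^ r ∂ν with hN
  set R := ∫⁻ s, (∫⁻ x, F s x ^ r ∂ν) ^ (1 / r) ∂μ with hR
  have hr0 : 0 < r := by linarith
  have hpq : r.HolderConjugate (r / (r - 1)) := Real.HolderConjugate.conjExponent hr
  have hmF : ∀ s, Measurable (F s) := fun s => hF.comp measurable_prodMk_left
  have h1 : N ≤ R * N ^ (1 / (r / (r - 1))) := by
    calc N = ∫⁻ x, G x * G x ^ (r - 1) ∂ν := by
          refine lintegral_congr fun x => ?_
          conv_lhs => rw [show r = 1 + (r - 1) by ring]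
          rw [ENNReal.rpow_add_of_nonneg _ _ (by norm_num) (by linarith), ENNReal.rpow_one]
      _ ≤ ∫⁻ x, (∫⁻ s, F s x ∂μ) * G x ^ (r - 1) ∂ν :=
          lintegral_mono fun x => mul_le_mul_left (hGH x) _
      _ = ∫⁻ x, ∫⁻ s, F s x * G x ^ (r - 1) ∂μ ∂ν := by
          refine lintegral_congr fun x => ?_
          rw [lintegral_mul_const]
          exact hF.comp measurable_prodMk_right
      _ = ∫⁻ s, ∫⁻ x, F s x * G x ^ (r - 1) ∂ν ∂μ := by
          rw [lintegral_lintegral_swap]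
          apply Measurable.aemeasurable
          exact (hF.comp measurable_swap).mul ((hG.comp measurable_fst).pow_const _)
      _ ≤ ∫⁻ s, (∫⁻ x, F s x ^ r ∂ν) ^ (1 / r) * N ^ (1 / (r / (r - 1))) ∂μ := by
          refine lintegral_mono fun s => ?_
          refine (ENNReal.lintegral_mul_le_Lp_mul_Lq ν hpq (hmF s).aemeasurable
            (hG.pow_const _).aemeasurable).trans (le_of_eq ?_)
          congr 2
          refine lintegral_congr fun x => ?_
          rw [← ENNReal.rpow_mul]; congr 1
          field_simp [sub_ne_zero.2 hr.ne']
      _ = R * N ^ (1 / (r / (r - 1))) := by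
          rw [lintegral_mul_const]
          apply Measurable.pow_const
          exact Measurable.lintegral_prod_right' (f := fun p : S × X => F p.1 p.2 ^ r)
            (hF.pow_const _)
  by_cases hN0 : N = 0
  · simp [hN0]
  have h2 : N = N ^ (1 / r) * N ^ (1 / (r / (r - 1))) := by
    rw [← ENNReal.rpow_add _ _ hN0 hfin]
    conv_lhs => rw [← ENNReal.rpow_one N]
    congr 1; field_simp; ring
  have h3 : N ^ (1 / r) ≤ R := by
    have h4 := h2.symm.le.trans h1
    have hc0 : N ^ (1 / (r / (r - 1))) ≠ 0 := by
      intro h0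
      rw [ENNReal.rpow_eq_zero_iff] at h0
      rcases h0 with h0 | h0
      · exact hN0 h0.1
      · exact hfin h0.1
    have hct : N ^ (1 / (r / (r - 1))) ≠ ∞ :=
      ENNReal.rpow_ne_top_of_ne_zero hN0 hfin
    exact (ENNReal.mul_le_mul_iff_left hc0 hct).1 h4
  calc N = (N ^ (1 / r)) ^ r := by rw [← ENNReal.rpow_mul]; simp [hr0.ne']
    _ ≤ R ^ r := ENNReal.rpow_le_rpow h3 hr0.le

lemma mink {S X : Type*} [MeasurableSpace S] [MeasurableSpace X] (μ : Measure S)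
    (ν : Measure X) [SFinite μ] [SigmaFinite ν] {r : ℝ} (hr : 1 < r) (F : S → X → ℝ≥0∞)
    (hF : Measurable (Function.uncurry F)) :
    ∫⁻ x, (∫⁻ s, F s x ∂μ) ^ r ∂ν ≤ (∫⁻ s, (∫⁻ x, F s x ^ r ∂ν) ^ (1 / r) ∂μ) ^ r := by
  have hr0 : 0 < r := by linarith
  set H : X → ℝ≥0∞ := fun x => ∫⁻ s, F s x ∂μ with hH
  have hHm : Measurable H := Measurable.lintegral_prod_left' (f := fun p : S × X => F p.1 p.2) hF
  set G : ℕ → X → ℝ≥0∞ := fun n => (spanningSets ν n).indicator (fun x => min (H x) n) with hGd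
  have hGm : ∀ n, Measurable (G n) := fun n =>
    (hHm.min measurable_const).indicator (measurableSet_spanningSets ν n)
  have hlim : Filter.Tendsto (fun n => ∫⁻ x, G n x ^ r ∂ν) Filter.atTop
      (nhds (∫⁻ x, H x ^ r ∂ν)) := by
    apply lintegral_tendsto_of_tendsto_of_monotone
    · exact fun n => ((hGm n).pow_const r).aemeasurable
    · refine Filter.Eventually.of_forall fun x n m hnm => ?_
      refine ENNReal.rpow_le_rpow ?_ hr0.le
      simp only [hGd]
      refine (indicator_le_indicator_of_subset (monotone_spanningSets ν hnm)
        (fun _ => zero_le) x).trans ?_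
      apply indicator_le_indicator
      exact min_le_min le_rfl (by exact_mod_cast hnm)
    · refine Filter.Eventually.of_forall fun x => ?_
      refine ((ENNReal.continuous_rpow_const (y := r)).tendsto (H x)).comp ?_
      have : Filter.Tendsto (fun n : ℕ => min (H x) (n : ℝ≥0∞)) Filter.atTop (nhds (min (H x) ⊤)) :=
        tendsto_const_nhds.min ENNReal.tendsto_nat_nhds_top
      rw [min_top_right] at this
      refine this.congr' ?_
      filter_upwards [Filter.eventually_ge_atTop (spanningSetsIndex ν x)] with n hn
      have : x ∈ spanningSets ν n := monotone_spanningSets ν hn (mem_spanningSetsIndex ν x)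
      simp [hGd, this]
  refine le_of_tendsto' hlim fun n => ?_
  refine mink_aux μ ν hr F hF (G n) (hGm n) ?_ ?_
  · intro x
    refine (indicator_le_self _ _ x).trans (min_le_left _ _)
  · refine ne_of_lt ?_
    calc ∫⁻ x, G n x ^ r ∂ν ≤ ∫⁻ x, (spanningSets ν n).indicator (fun _ => (n : ℝ≥0∞) ^ r) x ∂ν := by
          refine lintegral_mono fun x => ?_
          by_cases hx : x ∈ spanningSets ν n
          · simp only [hGd, indicator_of_mem hx]
            exact ENNReal.rpow_le_rpow (min_le_right _ _) hr0.le
          · simp [hGd, hx, hr0]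
      _ < ∞ := by
          rw [lintegral_indicator_const (measurableSet_spanningSets ν n)]
          exact ENNReal.mul_lt_top (ENNReal.rpow_lt_top_of_nonneg hr0.le (by simp))
            (measure_spanningSets_lt_top ν n)

section
open scoped FourierTransform SchwartzMap ContDiff

abbrev E3 := EuclideanSpace ℝ (Fin 3)

lemma fourier_cont {f : E3 → ℂ} (hf : Integrable f) : Continuous (𝓕 f : E3 → ℂ) :=
  VectorFourier.fourierIntegral_continuous Real.continuous_fourierChar
    (innerSL ℝ).continuous₂ hf

lemma fourier_enorm_le (f : E3 → ℂ) (x : E3) : ‖(𝓕 f : E3 → ℂ) x‖ₑ ≤ ∫⁻ y, ‖f y‖ₑ := by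
  rw [Real.fourier_eq]
  refine (enorm_integral_le_lintegral_enorm _).trans (le_of_eq ?_)
  congr 1; ext y
  rw [enorm_eq_iff_norm_eq, Circle.norm_smul]

lemma planch {f : E3 → ℂ} (hf : Integrable f) (hf2 : MemLp f 2) :
    eLpNorm (𝓕 f : E3 → ℂ) 2 volume = eLpNorm f 2 volume := by
  set g : Lp ℂ 2 (volume : Measure E3) := hf2.toLp f with hg
  have key : ∀ᵐ x, (𝓕 f : E3 → ℂ) x = (𝓕 g : Lp ℂ 2 (volume : Measure E3)) x := by
    apply ae_eq_of_integral_contDiff_smul_eq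
    · exact (fourier_cont hf).locallyIntegrable
    · exact (Lp.memLp _).locallyIntegrable (by norm_num)
    · intro φ hφ hc
      have hg₁ : HasCompactSupport (Complex.ofRealCLM ∘ φ) := hc.comp_left rfl
      have hg₂ : ContDiff ℝ ∞ (Complex.ofRealCLM ∘ φ) := by fun_prop
      set ψ : 𝓢(E3, ℂ) := hg₁.toSchwartzMap hg₂ with hψ
      have hψe : ∀ x, ψ x = (φ x : ℂ) := fun x => rfl
      have h1 := congrArg (fun T => T ψ) (Lp.fourier_toTemperedDistribution_eq g)
      simp only [TemperedDistribution.fourier_apply, Lp.toTemperedDistribution_apply] at h1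
      have h2 : ∫ x, (𝓕 ψ : 𝓢(E3, ℂ)) x • f x = ∫ x, ψ x • (𝓕 f : E3 → ℂ) x :=
        VectorFourier.integral_fourierIntegral_smul_eq_flip (L := innerₗ E3)
          Real.continuous_fourierChar (innerSL ℝ).continuous₂ ψ.integrable hf |>.trans (by
            simp [flip_innerₗ]; rfl)
      have h3 : ∫ x, (𝓕 ψ : 𝓢(E3, ℂ)) x • g x = ∫ x, (𝓕 ψ : 𝓢(E3, ℂ)) x • f x := by
        apply integral_congr_ae
        filter_upwards [hf2.coeFn_toLp] with x hx
        rw [hx]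
      rw [h3, h2] at h1
      simpa [hψe] using h1
  rw [eLpNorm_congr_ae key, ← eLpNorm_congr_ae hf2.coeFn_toLp]
  have := Lp.norm_fourier_eq g
  rw [Lp.norm_def, Lp.norm_def] at this
  exact (ENNReal.toReal_eq_toReal_iff' (Lp.memLp _).2.ne (Lp.memLp _).2.ne).1 this


end

section
open scoped FourierTransform
/-- level set estimate -/
lemma hy_level {r : ℝ} (hr : 2 < r) {f : E3 → ℂ} (hfm : Measurable f) (hf : Integrable f)
    {m : ℝ} (hm : 0 < m) (hM : ∫⁻ y, ENNReal.ofReal (‖f y‖ ^ (r / (r - 1))) = ENNReal.ofReal m)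
    {l : ℝ} (hl : 0 < l) :
    volume {x | l < ‖(𝓕 f : E3 → ℂ) x‖} ≤ ENNReal.ofReal (4 / l ^ 2) *
      ∫⁻ y, {y | l * ‖f y‖ ^ (1 / (r - 1)) ≤ 2 * m}.indicator
        (fun y => ENNReal.ofReal (‖f y‖ ^ 2)) y := by
  set S : Set E3 := {y | l * ‖f y‖ ^ (1 / (r - 1)) ≤ 2 * m} with hS
  have hr1 : 0 < r - 1 := by linarith
  have hSm : MeasurableSet S :=
    measurableSet_le (measurable_const.mul (hfm.norm.pow_const _)) measurable_const
  set g := S.indicator f with hg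
  set h := Sᶜ.indicator f with hh
  have hgi : Integrable g := hf.indicator hSm
  have hhi : Integrable h := hf.indicator hSm.compl
  have hgh : f = g + h := (indicator_self_add_compl S f).symm
  have hF : ∀ x, (𝓕 f : E3 → ℂ) x = (𝓕 g : E3 → ℂ) x + (𝓕 h : E3 → ℂ) x := by
    intro x
    have := VectorFourier.fourierIntegral_add (L := innerₗ E3)
          Real.continuous_fourierChar (innerSL ℝ).continuous₂ hgi hhi
    rw [← hgh] at this
    exact congrFun this x
  have hhb : ∀ x, ‖(𝓕 h : E3 → ℂ) x‖ ≤ l / 2 := by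
    intro x
    have h1 : ‖(𝓕 h : E3 → ℂ) x‖ₑ ≤ ENNReal.ofReal (l / 2) := by
      calc _ ≤ ∫⁻ y, ‖h y‖ₑ := fourier_enorm_le h x
        _ ≤ ∫⁻ y, ENNReal.ofReal (l / (2 * m)) * ENNReal.ofReal (‖f y‖ ^ (r / (r - 1))) := by
          refine lintegral_mono fun y => ?_
          by_cases hy : y ∈ S
          · simp [hh, hy]
          · simp only [hh, indicator_of_mem (show y ∈ Sᶜ from hy)]
            rw [← ofReal_norm, ← ENNReal.ofReal_mul (by positivity)]
            apply ENNReal.ofReal_le_ofReal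
            have hy' : 2 * m < l * ‖f y‖ ^ (1 / (r - 1)) := not_le.1 hy
            have e : r / (r - 1) = 1 + 1 / (r - 1) := by field_simp; ring
            rw [e]
            rcases (norm_nonneg (f y)).eq_or_lt with h0 | h0
            · rw [← h0]; positivity
            rw [Real.rpow_add h0, Real.rpow_one, div_mul_eq_mul_div, le_div_iff₀ (by positivity)]
            nlinarith
        _ = ENNReal.ofReal (l / 2) := by
          rw [lintegral_const_mul _ (by fun_prop), hM, ← ENNReal.ofReal_mul (by positivity)]
          congr 1; field_simp
    rw [← ofReal_norm] at h1
    exact (ENNReal.ofReal_le_ofReal_iff (by positivity)).1 h1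
  have hint : ∫⁻ y, S.indicator (fun y => ENNReal.ofReal (‖f y‖ ^ 2)) y = ∫⁻ y, ‖g y‖ₑ ^ (2:ℝ) := by
    refine lintegral_congr fun y => ?_
    by_cases hy : y ∈ S
    · simp only [hg, indicator_of_mem hy]
      rw [← ofReal_norm, ENNReal.ofReal_rpow_of_nonneg (by positivity) (by norm_num)]
      norm_num
    · simp [hg, hy]
  rw [hint]
  by_cases htop : ∫⁻ y, ‖g y‖ₑ ^ (2:ℝ) = ∞
  · rw [htop, ENNReal.mul_top]
    · exact le_top
    · simp; positivity
  have hnorm : ∀ φ : E3 → ℂ, eLpNorm φ 2 volume = (∫⁻ y, ‖φ y‖ₑ ^ (2:ℝ)) ^ (1 / 2 : ℝ) := by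
    intro φ
    rw [eLpNorm_eq_lintegral_rpow_enorm_toReal (by norm_num) (by norm_num)]; simp
  have hg2 : MemLp g 2 := by
    refine ⟨hgi.1, ?_⟩
    rw [hnorm]
    exact ENNReal.rpow_lt_top_of_nonneg (by norm_num) htop
  have hpl := planch hgi hg2
  rw [hnorm, hnorm] at hpl
  have hpl2 : ∫⁻ y, ‖(𝓕 g : E3 → ℂ) y‖ₑ ^ (2:ℝ) = ∫⁻ y, ‖g y‖ₑ ^ (2:ℝ) :=
    (ENNReal.rpow_left_injective (by norm_num : (1/2:ℝ) ≠ 0)) hpl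
  rw [← hpl2]
  have hmeas : Measurable (fun y => ‖(𝓕 g : E3 → ℂ) y‖ₑ ^ (2:ℝ)) :=
    ((fourier_cont hgi).measurable.enorm).pow_const _
  have hch := mul_meas_ge_le_lintegral (μ := volume) hmeas (ENNReal.ofReal (l ^ 2 / 4))
  calc volume {x | l < ‖(𝓕 f : E3 → ℂ) x‖}
      ≤ volume {x | ENNReal.ofReal (l ^ 2 / 4) ≤ ‖(𝓕 g : E3 → ℂ) x‖ₑ ^ (2:ℝ)} := by
        refine measure_mono fun x hx => ?_
        simp only [mem_ofPred_eq] at hx ⊢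
        rw [← ofReal_norm, ENNReal.ofReal_rpow_of_nonneg (by positivity) (by norm_num)]
        apply ENNReal.ofReal_le_ofReal
        have h1 := norm_add_le ((𝓕 g : E3 → ℂ) x) ((𝓕 h : E3 → ℂ) x)
        rw [← hF] at h1
        have h2 := hhb x
        have h3 : l / 2 ≤ ‖(𝓕 g : E3 → ℂ) x‖ := by linarith
        rw [Real.rpow_two]
        nlinarith
    _ = ENNReal.ofReal (4 / l ^ 2) * (ENNReal.ofReal (l ^ 2 / 4) * volume {x | ENNReal.ofReal (l ^ 2 / 4) ≤ ‖(𝓕 g : E3 → ℂ) x‖ₑ ^ (2:ℝ)}) := by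
        rw [← mul_assoc, ← ENNReal.ofReal_mul (by positivity)]
        rw [show 4 / l ^ 2 * (l ^ 2 / 4) = 1 by field_simp]; simp
    _ ≤ _ := by gcongr

lemma inner_int {r : ℝ} (hr : 2 < r) {m : ℝ} (hm : 0 < m) {a : ℝ} (ha : 0 ≤ a) :
    ∫⁻ l in Ioi (0:ℝ), {l : ℝ | l * a ^ (1 / (r - 1)) ≤ 2 * m}.indicator
      (fun l => ENNReal.ofReal (4 * l ^ (r - 3)) * ENNReal.ofReal (a ^ 2)) l ≤
    ENNReal.ofReal (4 / (r - 2) * (2 * m) ^ (r - 2)) * ENNReal.ofReal (a ^ (r / (r - 1))) := by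
  have hr1 : 0 < r - 1 := by linarith
  rcases ha.eq_or_lt with h0 | h0
  · rw [← h0]; simp
  set c := 2 * m / a ^ (1 / (r - 1)) with hc
  have hap : 0 < a ^ (1 / (r - 1)) := Real.rpow_pos_of_pos h0 _
  have hcpos : 0 < c := by positivity
  have h1 : ∀ l ∈ Ioi (0:ℝ), {l : ℝ | l * a ^ (1 / (r - 1)) ≤ 2 * m}.indicator
      (fun l => ENNReal.ofReal (4 * l ^ (r - 3)) * ENNReal.ofReal (a ^ 2)) l =
      (Iic c).indicator (fun l => ENNReal.ofReal (4 * l ^ (r - 3)) * ENNReal.ofReal (a ^ 2)) l := by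
    intro l _
    congr 1
    ext l
    simp only [mem_ofPred_eq, mem_Iic, hc]
    rw [le_div_iff₀ hap]
  rw [setLIntegral_congr_fun measurableSet_Ioi h1, setLIntegral_indicator measurableSet_Iic,
    Set.inter_comm, Ioi_inter_Iic, lintegral_mul_const _ (by fun_prop)]
  rw [← ofReal_integral_eq_lintegral_ofReal, integral_const_mul,
    ← intervalIntegral.integral_of_le hcpos.le, integral_rpow (Or.inl (by linarith)),
    ← ENNReal.ofReal_mul, ← ENNReal.ofReal_mul]
  · apply ENNReal.ofReal_le_ofReal
    apply le_of_eq
    rw [show r - 3 + 1 = r - 2 by ring, Real.zero_rpow (by linarith), hc,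
      Real.div_rpow (by positivity) hap.le, ← Real.rpow_mul h0.le]
    have e : a ^ 2 = a ^ (r / (r - 1)) * a ^ (1 / (r - 1) * (r - 2)) := by
      rw [← Real.rpow_add h0, ← Real.rpow_two]
      congr 1; field_simp; ring
    rw [e]
    have : 0 < a ^ (1 / (r - 1) * (r - 2)) := Real.rpow_pos_of_pos h0 _
    have : 0 < r - 2 := by linarith
    field_simp; ring
  · have : 0 < r - 2 := by linarith
    positivity
  · rw [show r - 3 + 1 = r - 2 by ring, Real.zero_rpow (by linarith)]
    have : 0 < r - 2 := by linarith
    have := Real.rpow_nonneg hcpos.le (r - 2)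
    apply mul_nonneg (by norm_num)
    apply div_nonneg <;> linarith
  · apply Integrable.const_mul
    have := (intervalIntegral.intervalIntegrable_rpow' (a := 0) (b := c) (r := r - 3) (by linarith)).1
    exact this
  · refine (ae_restrict_iff' measurableSet_Ioc).2 (Filter.Eventually.of_forall fun l hl => ?_)
    have := Real.rpow_nonneg hl.1.le (r - 3)
    simp only [Pi.zero_apply]; positivity

lemma hy {r : ℝ} (hr : 2 < r) {f : E3 → ℂ} (hfm : Measurable f) (hf : Integrable f) :
    ∫⁻ x, ENNReal.ofReal (‖(𝓕 f : E3 → ℂ) x‖ ^ r) ≤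
      ENNReal.ofReal (r * (4 / (r - 2) * 2 ^ (r - 2))) *
      (∫⁻ y, ENNReal.ofReal (‖f y‖ ^ (r / (r - 1)))) ^ (r - 1) := by
  have hr1 : 0 < r - 1 := by linarith
  have hr2 : 0 < r - 2 := by linarith
  set M := ∫⁻ y, ENNReal.ofReal (‖f y‖ ^ (r / (r - 1))) with hMdef
  by_cases hMt : M = ∞
  · rw [hMt, ENNReal.top_rpow_of_pos hr1, ENNReal.mul_top]
    · exact le_top
    · simp; positivity
  by_cases hM0 : M = 0
  · have h0 : f =ᵐ[volume] 0 := by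
      rw [hMdef, lintegral_eq_zero_iff (by fun_prop)] at hM0
      filter_upwards [hM0] with y hy
      simp only [Pi.zero_apply, ENNReal.ofReal_eq_zero] at hy
      by_contra hne
      have := Real.rpow_pos_of_pos (norm_pos_iff.2 hne) (r / (r - 1))
      linarith
    have : ∀ x, (𝓕 f : E3 → ℂ) x = 0 := by
      intro x
      rw [Real.fourier_congr_ae h0, Real.fourier_eq]; simp
    simp [this, Real.zero_rpow (show r ≠ 0 by linarith)]
  set m := M.toReal with hm
  have hmpos : 0 < m := ENNReal.toReal_pos hM0 hMt
  have hMm : M = ENNReal.ofReal m := (ENNReal.ofReal_toReal hMt).symm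
  rw [lintegral_rpow_eq_lintegral_meas_lt_mul volume
    (Filter.Eventually.of_forall fun x => norm_nonneg _)
    (fourier_cont hf).measurable.norm.aemeasurable (by linarith),
    ENNReal.ofReal_mul (by linarith), mul_assoc]
  gcongr
  calc ∫⁻ l in Ioi 0, volume {x | l < ‖(𝓕 f : E3 → ℂ) x‖} * ENNReal.ofReal (l ^ (r - 1))
      ≤ ∫⁻ l in Ioi 0, ∫⁻ y, {p : ℝ × E3 | p.1 * ‖f p.2‖ ^ (1 / (r - 1)) ≤ 2 * m}.indicator
            (fun p => ENNReal.ofReal (4 * p.1 ^ (r - 3)) * ENNReal.ofReal (‖f p.2‖ ^ 2)) (l, y) := by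
        refine setLIntegral_mono' measurableSet_Ioi fun l hl => ?_
        have hl : 0 < l := hl
        refine (mul_le_mul_left (hy_level hr hfm hf hmpos hMm hl) _).trans (le_of_eq ?_)
        rw [mul_right_comm, ← ENNReal.ofReal_mul (by positivity), ← lintegral_const_mul]
        · refine lintegral_congr fun y => ?_
          by_cases hy : l * ‖f y‖ ^ (1 / (r - 1)) ≤ 2 * m
          · rw [indicator_of_mem (by exact hy), indicator_of_mem (by exact hy)]
            congr 2
            rw [show r - 1 = (r - 3) + 2 by ring, Real.rpow_add hl, Real.rpow_two]
            field_simp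
          · rw [indicator_of_notMem (by exact hy), indicator_of_notMem (by exact hy), mul_zero]
        · apply Measurable.indicator (by fun_prop)
          exact measurableSet_le (measurable_const.mul (hfm.norm.pow_const _)) measurable_const
    _ = ∫⁻ y, ∫⁻ l in Ioi 0, {p : ℝ × E3 | p.1 * ‖f p.2‖ ^ (1 / (r - 1)) ≤ 2 * m}.indicator
            (fun p => ENNReal.ofReal (4 * p.1 ^ (r - 3)) * ENNReal.ofReal (‖f p.2‖ ^ 2)) (l, y) := by
        rw [lintegral_lintegral_swap]
        apply Measurable.aemeasurable
        apply Measurable.indicator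
        · fun_prop
        · exact measurableSet_le (measurable_fst.mul
            ((hfm.comp measurable_snd).norm.pow_const _)) measurable_const
    _ ≤ ∫⁻ y, ENNReal.ofReal (4 / (r - 2) * (2 * m) ^ (r - 2)) *
          ENNReal.ofReal (‖f y‖ ^ (r / (r - 1))) :=
        lintegral_mono fun y => inner_int hr hmpos (norm_nonneg (f y))
    _ = ENNReal.ofReal (4 / (r - 2) * 2 ^ (r - 2)) * M ^ (r - 1) := by
        rw [lintegral_const_mul _ (by fun_prop), ← hMdef, hMm,
          ENNReal.ofReal_rpow_of_pos hmpos, ← ENNReal.ofReal_mul (by positivity),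
          ← ENNReal.ofReal_mul (by positivity)]
        congr 1
        rw [Real.mul_rpow (by norm_num) hmpos.le, show r - 1 = (r - 2) + 1 by ring,
          Real.rpow_add hmpos, Real.rpow_one]
        ring

end

section
open scoped FourierTransform

lemma schrod_norm {τ : ℝ} (hτ : 0 < τ) (f : E3 → ℂ) (x : E3) :
    ‖schrod 3 τ f x‖ = (4 * π * τ) ^ (-(3 / 2) : ℝ) *
      ‖(𝓕 (fun y => Complex.exp (Complex.I * ((‖y‖ ^ 2 : ℝ) : ℂ) / (4 * (τ : ℂ))) * f y) : E3 → ℂ)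
        ((4 * π * τ)⁻¹ • x)‖ := by
  have hpos : 0 < 4 * π * τ := by positivity
  have hτc : (τ : ℂ) ≠ 0 := by exact_mod_cast hτ.ne'
  unfold schrod
  rw [if_neg hτ.ne', norm_mul]
  congr 1
  · rw [show 4 * (π : ℂ) * Complex.I * (τ : ℂ) = ((4 * π * τ : ℝ) : ℂ) * Complex.I by
      push_cast; ring]
    rw [Complex.norm_cpow_of_ne_zero]
    · have e : (-((3 : ℕ) : ℂ) / 2) = ((-(3 / 2) : ℝ) : ℂ) := by push_cast; ring
      rw [e, Complex.ofReal_re, Complex.ofReal_im]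
      simp only [norm_mul, Complex.norm_I, mul_one, Complex.norm_real, mul_zero, Real.exp_zero,
        div_one]
      rw [← norm_mul, ← norm_mul]
      congr 1
      simp [abs_of_pos hτ, abs_of_pos Real.pi_pos]
    · simp [hτ.ne', Real.pi_ne_zero]
  · rw [Real.fourier_eq']
    have : ∀ y : E3, Complex.exp (Complex.I * ((‖x - y‖ ^ 2 : ℝ) : ℂ) / (4 * (τ : ℂ))) * f y =
        Complex.exp (((‖x‖ ^ 2 / (4 * τ) : ℝ) : ℂ) * Complex.I) *
        (Complex.exp ((↑(-2 * π * inner ℝ y ((4 * π * τ)⁻¹ • x)) * Complex.I)) •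
          (Complex.exp (Complex.I * ((‖y‖ ^ 2 : ℝ) : ℂ) / (4 * (τ : ℂ))) * f y)) := by
      intro y
      rw [smul_eq_mul, ← mul_assoc, ← mul_assoc, ← Complex.exp_add, ← Complex.exp_add]
      congr 2
      rw [norm_sub_sq_real, inner_smul_right, real_inner_comm]
      have hpi : (π : ℂ) ≠ 0 := by exact_mod_cast Real.pi_ne_zero
      push_cast
      field_simp
      ring
    simp_rw [this]
    rw [integral_const_mul, norm_mul, Complex.norm_exp_ofReal_mul_I, one_mul]

lemma lint_scale (φ : E3 → ℝ≥0∞) (hφ : Measurable φ) {c : ℝ} (hc : 0 < c) :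
    ∫⁻ x, φ (c⁻¹ • x) = ENNReal.ofReal (c ^ 3) * ∫⁻ x, φ x := by
  rw [← lintegral_map (μ := volume) hφ (measurable_const_smul (c⁻¹)),
    Measure.map_addHaar_smul volume (inv_ne_zero hc.ne'), lintegral_smul_measure]
  simp [abs_of_pos hc]

/-- the dispersive constant -/
def dK (r : ℝ) : ℝ := (4 * π) ^ (-(3 * (r - 2) / (2 * r))) * (r * (4 / (r - 2) * 2 ^ (r - 2))) ^ (1 / r)

lemma dK_pos {r : ℝ} (hr : 2 < r) : 0 < dK r := by
  have : 0 < r - 2 := by linarith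
  unfold dK; positivity

lemma dispersive {r : ℝ} (hr : 2 < r) {τ : ℝ} (hτ : 0 < τ) {f : E3 → ℂ} (hf : Measurable f) :
    (∫⁻ x, ‖schrod 3 τ f x‖ₑ ^ r) ^ (1 / r) ≤
      ENNReal.ofReal (dK r * τ ^ (-(3 * (r - 2) / (2 * r)))) *
        (∫⁻ y, ‖f y‖ₑ ^ (r / (r - 1))) ^ ((r - 1) / r) := by
  have hr0 : 0 < r := by linarith
  have hr1 : 0 < r - 1 := by linarith
  have hr2 : 0 < r - 2 := by linarith
  set g : E3 → ℂ := fun y => Complex.exp (Complex.I * ((‖y‖ ^ 2 : ℝ) : ℂ) / (4 * (τ : ℂ))) * f y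
    with hg
  have hgm : Measurable g := by rw [hg]; fun_prop
  have hgn : ∀ y, ‖g y‖ = ‖f y‖ := by
    intro y
    simp only [hg, norm_mul]
    rw [show Complex.I * ((‖y‖ ^ 2 : ℝ) : ℂ) / (4 * (τ : ℂ)) =
      ((‖y‖ ^ 2 / (4 * τ) : ℝ) : ℂ) * Complex.I by push_cast; ring,
      Complex.norm_exp_ofReal_mul_I, one_mul]
  set c := 4 * π * τ with hc
  have hcpos : 0 < c := by positivity
  have hs : ∀ x, ‖schrod 3 τ f x‖ₑ ^ r = ENNReal.ofReal (c ^ (-(3 / 2 * r))) *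
      ENNReal.ofReal (‖(𝓕 g : E3 → ℂ) (c⁻¹ • x)‖ ^ r) := by
    intro x
    rw [← ofReal_norm, ENNReal.ofReal_rpow_of_nonneg (norm_nonneg _) hr0.le, schrod_norm hτ,
      Real.mul_rpow (by positivity) (norm_nonneg _), ← Real.rpow_mul hcpos.le,
      ← ENNReal.ofReal_mul (by positivity), neg_mul]
  simp_rw [hs]
  by_cases hgi : Integrable g
  · have hFm : Measurable (𝓕 g : E3 → ℂ) := (fourier_cont hgi).measurable
    have hM : ∫⁻ y, ‖f y‖ₑ ^ (r / (r - 1)) = ∫⁻ y, ENNReal.ofReal (‖g y‖ ^ (r / (r - 1))) := by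
      refine lintegral_congr fun y => ?_
      rw [← ofReal_norm, ENNReal.ofReal_rpow_of_nonneg (norm_nonneg _) (by positivity), hgn]
    rw [lintegral_const_mul _ (by fun_prop),
      lint_scale (fun x => ENNReal.ofReal (‖(𝓕 g : E3 → ℂ) x‖ ^ r)) (by fun_prop) hcpos, hM]
    calc _ ≤ (ENNReal.ofReal (c ^ (-(3 / 2 * r))) * (ENNReal.ofReal (c ^ 3) *
          (ENNReal.ofReal (r * (4 / (r - 2) * 2 ^ (r - 2))) *
            (∫⁻ y, ENNReal.ofReal (‖g y‖ ^ (r / (r - 1)))) ^ (r - 1)))) ^ (1 / r) := by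
          gcongr
          exact hy hr hgm hgi
      _ = _ := by
          rw [← mul_assoc, ← mul_assoc, ENNReal.mul_rpow_of_nonneg _ _ (by positivity),
            ← ENNReal.ofReal_mul (by positivity), ← ENNReal.ofReal_mul (by positivity),
            ENNReal.ofReal_rpow_of_nonneg (by positivity) (by positivity), ← ENNReal.rpow_mul,
            mul_one_div]
          congr 2
          rw [Real.mul_rpow (by positivity) (by positivity), ← Real.rpow_natCast c 3,
            ← Real.rpow_add hcpos, ← Real.rpow_mul hcpos.le, dK, mul_right_comm]
          congr 1
          rw [hc, ← Real.mul_rpow (by positivity) hτ.le]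
          congr 1
          push_cast; field_simp; ring
  · have h0 : ∀ w, (𝓕 g : E3 → ℂ) w = 0 := by
      intro w
      rw [Real.fourier_eq]
      apply integral_undef
      rwa [Real.fourierIntegral_convergent_iff]
    simp [h0, hr0, hr0.ne']

end

lemma time_int {B t : ℝ} (hB : 0 < B) {I : Set ℝ} (hI : MeasurableSet I) (hIt : I ⊆ Iic (t - B))
    {A : ℝ} (hA : 0 ≤ A) :
    ∫⁻ s in I, ENNReal.ofReal (A * (t - s) ^ (-2 : ℝ)) ≤ ENNReal.ofReal (A * B⁻¹) := by
  have hmeas : Measurable fun τ : ℝ => ENNReal.ofReal (A * τ ^ (-2 : ℝ)) := by fun_prop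
  calc ∫⁻ s in I, ENNReal.ofReal (A * (t - s) ^ (-2 : ℝ))
      = ∫⁻ s, I.indicator (fun s => ENNReal.ofReal (A * (t - s) ^ (-2 : ℝ))) s := by
        rw [lintegral_indicator hI]
    _ ≤ ∫⁻ s, (Ici B).indicator (fun τ => ENNReal.ofReal (A * τ ^ (-2 : ℝ))) (t - s) := by
        refine lintegral_mono fun s => ?_
        by_cases hs : s ∈ I
        · have : t - s ∈ Ici B := by have := hIt hs; simp only [mem_Iic, mem_Ici] at *; linarith
          rw [indicator_of_mem hs, indicator_of_mem this]
        · simp [hs]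
    _ = ∫⁻ τ, (Ici B).indicator (fun τ => ENNReal.ofReal (A * τ ^ (-2 : ℝ))) τ :=
        lintegral_sub_left_eq_self _ t
    _ = ∫⁻ τ in Ioi B, ENNReal.ofReal (A * τ ^ (-2 : ℝ)) := by
        rw [lintegral_indicator measurableSet_Ici]
        exact setLIntegral_congr Ioi_ae_eq_Ici.symm
    _ = ENNReal.ofReal (A * B⁻¹) := by
        rw [← ofReal_integral_eq_lintegral_ofReal, integral_const_mul,
          integral_Ioi_rpow_of_lt (by norm_num) hB]
        · congr 2
          norm_num [Real.rpow_neg_one]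
        · exact (integrableOn_Ioi_rpow_of_lt (by norm_num) hB).const_mul A
        · refine (ae_restrict_iff' measurableSet_Ioi).2 (Filter.Eventually.of_forall fun l hl => ?_)
          have := Real.rpow_nonneg (hB.trans hl).le (-2)
          simp only [Pi.zero_apply]; positivity

lemma kern_meas (t : ℝ) (f : ℝ → E3 → ℂ) (hf : Measurable (Function.uncurry f)) :
    Measurable (Function.uncurry fun (s : ℝ) (x : E3) => ‖schrod 3 (t - s) (f s) x‖ₑ) := by
  have h1 : Measurable fun p : ℝ × E3 => ∫ y,
      Complex.exp (Complex.I * ((‖p.2 - y‖ ^ 2 : ℝ) : ℂ) / (4 * ((t - p.1 : ℝ) : ℂ))) * f p.1 y := by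
    apply StronglyMeasurable.measurable
    apply StronglyMeasurable.integral_prod_right'
      (f := fun q : (ℝ × E3) × E3 => Complex.exp (Complex.I * ((‖q.1.2 - q.2‖ ^ 2 : ℝ) : ℂ) /
        (4 * ((t - q.1.1 : ℝ) : ℂ))) * f q.1.1 q.2)
    apply Measurable.stronglyMeasurable
    have : Measurable fun q : (ℝ × E3) × E3 => f q.1.1 q.2 :=
      hf.comp ((measurable_fst.comp measurable_fst).prodMk measurable_snd)
    fun_prop
  have h2 : (Function.uncurry fun (s : ℝ) (x : E3) => ‖schrod 3 (t - s) (f s) x‖ₑ) =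
      fun p : ℝ × E3 => ‖if t - p.1 = 0 then f p.1 p.2 else
        (4 * (π : ℂ) * Complex.I * ((t - p.1 : ℝ) : ℂ)) ^ (-((3 : ℕ) : ℂ) / 2) * ∫ y,
        Complex.exp (Complex.I * ((‖p.2 - y‖ ^ 2 : ℝ) : ℂ) / (4 * ((t - p.1 : ℝ) : ℂ))) * f p.1 y‖ₑ := by
    ext p
    simp only [Function.uncurry, schrod]
    split_ifs <;> rfl
  rw [h2]
  apply Measurable.enorm
  apply Measurable.ite
  · exact (measurable_const.sub measurable_fst) (measurableSet_singleton 0)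
  · exact hf
  · apply Measurable.mul _ h1
    apply Measurable.pow_const
    fun_prop

set_option maxHeartbeats 2000000

/-- **Three-dimensional middle-time piece estimate.**  Fix `2 < r < 6`.  For any `t > 0`,
`B > 0`, any measurable interval `I ⊆ [t/2, max (t/2) (t-B)]`, and any measurable `u` on
`I × ℝ³`, `‖∫_I e^{i(t-s)Δ}(|u|^{4/3}u)(s) ds‖_{L^r_x} ≤ C B^{-3(r-2)/(4r)}
  ‖u‖^{7/3}_{L^{28r/(3(r+6))}_s L^{7r/(3(r-1))}_x(I×ℝ³)}`, with `C = C(r)`. -/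
theorem middle_time_piece_3d (r : ℝ) (hr : 2 < r) (hr6 : r < 6) :
    ∃ C : ℝ, 0 < C ∧
      ∀ t : ℝ, 0 < t → ∀ B : ℝ, 0 < B →
        ∀ I : Set ℝ, MeasurableSet I → I.OrdConnected →
          I ⊆ Set.Icc (t / 2) (max (t / 2) (t - B)) →
          ∀ u : ℝ → EuclideanSpace ℝ (Fin 3) → ℂ, Measurable (Function.uncurry u) →
            eLpNorm (fun x => ∫ s in I, schrod 3 (t - s) (nonlin (4 / 3) (u s)) x)
                (ENNReal.ofReal r) volume ≤
              ENNReal.ofReal (C * B ^ (-(3 * (r - 2) / (4 * r)))) *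
                mixedNorm volume I (ENNReal.ofReal (28 * r / (3 * (r + 6))))
                    (ENNReal.ofReal (7 * r / (3 * (r - 1)))) u ^ ((7 : ℝ) / 3) := by
  have hr0 : 0 < r := by linarith
  have hr1 : 0 < r - 1 := by linarith
  have hr2 : 0 < r - 2 := by linarith
  refine ⟨dK r, dK_pos hr, ?_⟩
  intro t ht B hB I hI _ hsub u hu
  set q := 7 * r / (3 * (r - 1)) with hq
  set P := 28 * r / (3 * (r + 6)) with hP
  have hqpos : 0 < q := by positivity
  have hPpos : 0 < P := by positivity
  by_cases hcase : t - B ≤ t / 2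
  · -- degenerate interval
    have hsub2 : I ⊆ {t / 2} := by
      rw [max_eq_left hcase, Icc_self] at hsub; exact hsub
    have h0 : volume.restrict I = 0 := by
      rw [Measure.restrict_eq_zero]
      exact measure_mono_null hsub2 (by simp)
    simp [h0]
  push Not at hcase
  have hIt : I ⊆ Iic (t - B) := by
    rw [max_eq_right hcase.le] at hsub
    exact fun s hs => (hsub hs).2
  set f : ℝ → E3 → ℂ := fun s => nonlin (4 / 3) (u s) with hf
  have hfm : Measurable (Function.uncurry f) := by
    have : Function.uncurry f = fun p => ((‖Function.uncurry u p‖ ^ (4 / 3 : ℝ) : ℝ) : ℂ) *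
      Function.uncurry u p := rfl
    rw [this]; fun_prop
  have hfs : ∀ s, Measurable (f s) := fun s => hfm.comp measurable_prodMk_left
  have hfn : ∀ s y, ‖f s y‖ₑ = ‖u s y‖ₑ ^ (7 / 3 : ℝ) := by
    intro s y
    have : ‖f s y‖ = ‖u s y‖ ^ (7 / 3 : ℝ) := by
      simp only [hf, nonlin, norm_mul, Complex.norm_real, Real.norm_eq_abs]
      rw [abs_of_nonneg (by positivity), show (7 / 3 : ℝ) = 4 / 3 + 1 by norm_num,
        Real.rpow_add_of_nonneg (norm_nonneg _) (by norm_num) (by norm_num), Real.rpow_one]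
    rw [← ofReal_norm, this, ← ENNReal.ofReal_rpow_of_nonneg (norm_nonneg _) (by norm_num),
      ofReal_norm]
  set U : ℝ → ℝ≥0∞ := fun s => eLpNorm (u s) (ENNReal.ofReal q) volume with hU
  have hUe : ∀ s, U s = (∫⁻ y, ‖u s y‖ₑ ^ q) ^ (1 / q) := by
    intro s
    simp only [hU]
    rw [eLpNorm_eq_lintegral_rpow_enorm_toReal (by simpa using hqpos) (by simp),
      ENNReal.toReal_ofReal hqpos.le]
  have hUm : Measurable U := by
    have : U = fun s => (∫⁻ y, ‖u s y‖ₑ ^ q) ^ (1 / q) := funext hUe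
    rw [this]
    apply Measurable.pow_const
    exact Measurable.lintegral_prod_right' (f := fun p : ℝ × E3 => ‖u p.1 p.2‖ₑ ^ q)
      (hu.enorm.pow_const _)
  have hUf : ∀ s, (∫⁻ y, ‖f s y‖ₑ ^ (r / (r - 1))) ^ ((r - 1) / r) = U s ^ (7 / 3 : ℝ) := by
    intro s
    rw [hUe, ← ENNReal.rpow_mul]
    have e1 : ∀ y, ‖f s y‖ₑ ^ (r / (r - 1)) = ‖u s y‖ₑ ^ q := by
      intro y
      rw [hfn, ← ENNReal.rpow_mul]
      congr 1; rw [hq]; field_simp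
    simp_rw [e1]
    congr 1; rw [hq]; field_simp
  set m := 4 * r / (3 * (r - 2)) with hm
  set k := 4 * r / (r + 6) with hk
  have hmpos : 0 < m := by positivity
  have hkpos : 0 < k := by positivity
  have hmk : m.HolderConjugate k := by
    rw [Real.holderConjugate_iff]
    constructor
    · rw [hm, lt_div_iff₀ (by positivity)]; linarith
    · rw [hm, hk]; field_simp; ring
  have hmix : mixedNorm volume I (ENNReal.ofReal P) (ENNReal.ofReal q) u ^ ((7 : ℝ) / 3) =
      (∫⁻ s in I, (U s ^ (7 / 3 : ℝ)) ^ k) ^ (1 / k) := by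
    rw [mixedNorm, if_neg (by simp), ENNReal.toReal_ofReal hPpos.le, ← ENNReal.rpow_mul]
    simp_rw [← ENNReal.rpow_mul]
    rw [show (7 / 3 : ℝ) * k = P by rw [hk, hP]; field_simp; ring,
      show 1 / P * (7 / 3) = 1 / k by rw [hk, hP]; field_simp; ring]
  set w : ℝ → ℝ≥0∞ := fun s =>
    ENNReal.ofReal (dK r * (t - s) ^ (-(3 * (r - 2) / (2 * r)))) with hw
  have hwm : Measurable w := by rw [hw]; fun_prop
  have hKpos := dK_pos hr
  have hwint : (∫⁻ s in I, w s ^ m) ^ (1 / m) ≤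
      ENNReal.ofReal (dK r * B ^ (-(3 * (r - 2) / (4 * r)))) := by
    have e1 : ∀ s ∈ I, w s ^ m = ENNReal.ofReal (dK r ^ m * (t - s) ^ (-2 : ℝ)) := by
      intro s hs
      have hts : 0 < t - s := by have := hIt hs; simp only [mem_Iic] at this; linarith
      simp only [hw]
      rw [ENNReal.ofReal_rpow_of_nonneg (by positivity) hmpos.le,
        Real.mul_rpow hKpos.le (by positivity), ← Real.rpow_mul hts.le]
      congr 3
      rw [hm]; field_simp; ring
    rw [setLIntegral_congr_fun hI e1]
    refine (ENNReal.rpow_le_rpow (time_int hB hI hIt (by positivity)) (by positivity)).trans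
      (le_of_eq ?_)
    rw [ENNReal.ofReal_rpow_of_nonneg (by positivity) (by positivity),
      Real.mul_rpow (by positivity) (by positivity), ← Real.rpow_mul hKpos.le,
      ← Real.rpow_neg_one B, ← Real.rpow_mul hB.le]
    congr 2
    · rw [mul_one_div_cancel hmpos.ne', Real.rpow_one]
    · congr 1; rw [hm]; field_simp
  rw [hmix, eLpNorm_eq_lintegral_rpow_enorm_toReal (by simpa using hr0) (by simp),
      ENNReal.toReal_ofReal hr0.le]
  calc (∫⁻ x, ‖∫ s in I, schrod 3 (t - s) (f s) x‖ₑ ^ r) ^ (1 / r)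
      ≤ (∫⁻ x, (∫⁻ s in I, ‖schrod 3 (t - s) (f s) x‖ₑ) ^ r) ^ (1 / r) := by
        gcongr with x
        exact enorm_integral_le_lintegral_enorm _
    _ ≤ ((∫⁻ s in I, (∫⁻ x, ‖schrod 3 (t - s) (f s) x‖ₑ ^ r) ^ (1 / r)) ^ r) ^ (1 / r) := by
        refine ENNReal.rpow_le_rpow ?_ (by positivity)
        exact mink (volume.restrict I) volume (by linarith)
          (fun s x => ‖schrod 3 (t - s) (f s) x‖ₑ) (kern_meas t f hfm)
    _ = ∫⁻ s in I, (∫⁻ x, ‖schrod 3 (t - s) (f s) x‖ₑ ^ r) ^ (1 / r) := by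
        rw [← ENNReal.rpow_mul, mul_one_div_cancel hr0.ne', ENNReal.rpow_one]
    _ ≤ ∫⁻ s in I, (w * fun s => U s ^ (7 / 3 : ℝ)) s := by
        refine setLIntegral_mono' hI fun s hs => ?_
        have hts : 0 < t - s := by have := hIt hs; simp only [mem_Iic] at this; linarith
        refine (dispersive hr hts (hfs s)).trans (le_of_eq ?_)
        rw [hUf]; rfl
    _ ≤ (∫⁻ s in I, w s ^ m) ^ (1 / m) * (∫⁻ s in I, (U s ^ (7 / 3 : ℝ)) ^ k) ^ (1 / k) :=
        ENNReal.lintegral_mul_le_Lp_mul_Lq _ hmk hwm.aemeasurable (hUm.pow_const _).aemeasurable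
    _ ≤ _ := by gcongr
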